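/- Let s₁ ≥ s₂ ≥ … ≥ s_m ≥ 1 be integers with m ≥ 2 and s₁ + … + s_m = n. Let k < m be the least index such that s_{k+1} + … + s_m ≤ (3/4)·n, put s' = (s_{k+1}, …, s_m) and n' = s_{k+1} + … + s_m, and for an integer L let C'(L) = ∑_{j > k, s_j < L} s_j and D'(L) = #{j > k : s_j ≥ L}. Let p : Fin n → List Bool be any function with ∑_x (length of p(x)) ≤ 2·min( n'/8 , (1/32)·min_{L ≥ 1, C'(L) < n'} (C'(L) + D'(L))·max{1, log₂ D'(L)} ). Then there exists a partition of Fin n into sets X₁, …, X_m with |X_j| = s_j for every j, such that for every j the set {p(x) : x ∈ X_j} is totally ordered by the prefix relation (all positions of X_j lie on a common root-to-leaf path). -/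

import Mathlib

/-!
Elements at the root are comparable to all others, so it suffices to place the remaining ones.
Go through the clusters in order of decreasing size and give each of them elements from a position
that holds the most unplaced elements, as many as fit. If every element gets placed, root elements
fill up the clusters.

Otherwise each cluster that could not be filled has exhausted its position, and these positions are
distinct. At a suitable level `L` these deficient clusters make up at least half of the `D'(L)`
clusters of size at least `L`, while among the smaller ones the full clusters make up at least half
of the mass `C'(L)`; the elements of the latter are still unplaced when all large clusters have been
served. So the exhausted positions of the large clusters are at least `D'(L) / 2` in number, each
holds at least as many elements as any position holds unplaced ones at that time, and at least
`C'(L) / 2` elements are unplaced. As a binary tree has few positions of small depth, the total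
depth exceeds the bound.
-/

open Finset

section Levels
variable {ι : Type*}

theorem sum_filter_le_add_mul_card_filter_lt (s : ι → ℕ) (A : Finset ι) (N : ℕ) :
    ∑ i ∈ A with s i ≤ N, s i + N * #{i ∈ A | N < s i} =
      ∑ l ∈ range N, #{i ∈ A | l < s i} := by
  have hmin (i : ι) : #{l ∈ range N | l < s i} = min (s i) N := by
    rw [← card_range (min (s i) N)]
    congr 1
    grind
  calc ∑ i ∈ A with s i ≤ N, s i + N * #{i ∈ A | N < s i}
      = ∑ i ∈ A, min (s i) N := by
        rw [← sum_filter_add_sum_filter_not A (s · ≤ N) fun i ↦ min (s i) N, mul_comm,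
          ← smul_eq_mul, ← sum_const]
        simp only [not_le]
        congr 1 <;> refine sum_congr rfl fun i hi ↦ ?_ <;> grind
    _ = ∑ i ∈ A, #{l ∈ range N | l < s i} := by simp only [hmin]
    _ = ∑ l ∈ range N, #{i ∈ A | l < s i} :=
        sum_card_bipartiteAbove_eq_sum_card_bipartiteBelow fun i l ↦ l < s i

theorem exists_card_superlevel_lt (s : ι → ℕ) {A F : Finset ι}
    (h : ∑ i ∈ F, s i < ∑ i ∈ A, s i) : ∃ l, #{i ∈ F | l < s i} < #{i ∈ A | l < s i} := by
  classical
  by_contra! hle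
  have hsum {Z : Finset ι} (hZ : Z ⊆ A ∪ F) :
      ∑ i ∈ Z, s i = ∑ l ∈ range ((A ∪ F).sup s), #{i ∈ Z | l < s i} := by
    have hs {i : ι} (hi : i ∈ Z) : s i ≤ (A ∪ F).sup s := le_sup (hZ hi)
    rw [← sum_filter_le_add_mul_card_filter_lt, filter_true_of_mem fun _ ↦ hs,
      filter_false_of_mem fun _ hi ↦ (hs hi).not_gt, card_empty, mul_zero, add_zero]
  rw [hsum subset_union_left, hsum subset_union_right] at h
  exact h.not_ge (sum_le_sum fun l _ ↦ hle l)

/-- The least level above which `A` is nonempty and not outnumbered by `F` works: at lower levels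
`F` is ahead, so by layers it also dominates the sum. -/
theorem exists_balanced_level (s : ι → ℕ) {A F : Finset ι} (h : ∑ i ∈ F, s i < ∑ i ∈ A, s i) :
    ∃ N, {i ∈ A | N < s i}.Nonempty ∧ #{i ∈ F | N < s i} ≤ #{i ∈ A | N < s i} ∧
      ∑ i ∈ A with s i ≤ N, s i ≤ ∑ i ∈ F with s i ≤ N, s i := by
  have hex : ∃ N, {i ∈ A | N < s i}.Nonempty ∧ #{i ∈ F | N < s i} ≤ #{i ∈ A | N < s i} := by
    obtain ⟨l, hl⟩ := exists_card_superlevel_lt s h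
    exact ⟨l, card_pos.1 (by lia), hl.le⟩
  obtain ⟨hne, hcard⟩ := Nat.find_spec hex
  refine ⟨Nat.find hex, hne, hcard, ?_⟩
  have hahead : ∑ l ∈ range (Nat.find hex), #{i ∈ A | l < s i} ≤
      ∑ l ∈ range (Nat.find hex), #{i ∈ F | l < s i} := by
    refine sum_le_sum fun l hl ↦ ?_
    by_contra! hlt
    exact Nat.find_min hex (mem_range.1 hl) ⟨card_pos.1 (by lia), hlt.le⟩
  have hA := sum_filter_le_add_mul_card_filter_lt s A (Nat.find hex)
  have hF := sum_filter_le_add_mul_card_filter_lt s F (Nat.find hex)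
  have hmul := Nat.mul_le_mul_left (Nat.find hex) hcard
  lia

end Levels

theorem exists_linearOrder_antitone {ι γ : Type*} [LinearOrder γ] (s : ι → γ) :
    ∃ _ : LinearOrder ι, Antitone s := by
  classical
  let _ : LinearOrder ι := linearOrderOfSTO WellOrderingRel
  let key (i : ι) : γᵒᵈ ×ₗ ι := toLex (OrderDual.toDual (s i), i)
  have hkey : Function.Injective key := fun i j h ↦ congrArg (fun t ↦ (ofLex t).2) h
  exact ⟨LinearOrder.lift' key hkey, fun i j h ↦ Prod.Lex.monotone_fst (key i) (key j) h⟩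

theorem exists_partition_extending {ι α : Type*} [Fintype ι] [Fintype α] {s : ι → ℕ}
    (hs : ∑ j, s j = Fintype.card α) {Y : ι → Finset α}
    (hdisj : ∀ i j, i ≠ j → Disjoint (Y i) (Y j)) (hcard : ∀ j, #(Y j) ≤ s j) :
    ∃ X : ι → Finset α, Y ≤ X ∧ (∀ j, #(X j) = s j) ∧ (∀ i j, i ≠ j → Disjoint (X i) (X j)) ∧
      ∀ x, ∃ j, x ∈ X j := by
  classical
  obtain ⟨X, hYX, ⟨hXdisj, hXcard⟩, hXmax⟩ := Set.Finite.exists_le_maximal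
    (Set.toFinite {X : ι → Finset α | (∀ i j, i ≠ j → Disjoint (X i) (X j)) ∧ ∀ j, #(X j) ≤ s j})
    ⟨hdisj, hcard⟩
  have hunion : #(univ.biUnion X) = ∑ j, #(X j) := card_biUnion fun i _ j _ ↦ hXdisj i j
  have hfull : ∀ x, ∃ j, x ∈ X j := by
    by_contra! ⟨x, hx⟩
    obtain ⟨j, -, hj⟩ : ∃ j ∈ univ, #(X j) < s j := by
      refine exists_lt_of_sum_lt ?_
      rw [hs, ← hunion, card_lt_iff_ne_univ]
      exact fun h ↦ by simpa [hx] using h.ge (mem_univ x)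
    have hle : Function.update X j (insert x (X j)) ≤ X := by
      refine hXmax ⟨fun a b hab ↦ ?_, fun a ↦ ?_⟩ ?_
      · simp only [Function.update_apply]
        have := hXdisj a b hab
        grind
      · grind
      · exact le_update_iff.2 ⟨subset_insert _ _, fun _ _ ↦ le_rfl⟩
    exact hx j (by simpa using hle j (by simp : x ∈ _))
  have hsum : ∑ j, #(X j) = ∑ j, s j := by
    rw [← hunion, hs, ← card_univ]
    exact congrArg card (eq_univ_of_forall fun x ↦ by simpa using hfull x)
  have hXs : ∀ j, #(X j) = s j := fun j ↦
    (sum_eq_sum_iff_of_le fun j _ ↦ hXcard j).1 hsum j (mem_univ j)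
  exact ⟨X, hYX, hXs, hXdisj, hfull⟩

theorem card_le_sum_pow_of_length_lt {σ : Type*} [Fintype σ] {d : ℕ} {K : Finset (List σ)}
    (hK : ∀ u ∈ K, u.length < d) : #K ≤ ∑ i ∈ range d, Fintype.card σ ^ i := by
  classical
  rw [card_eq_sum_card_fiberwise fun u hu ↦ mem_range.2 (hK u hu)]
  refine sum_le_sum fun i _ ↦ ?_
  rw [← card_vector i, ← card_univ, ← card_map ⟨List.Vector.toList, Subtype.val_injective⟩]
  refine card_le_card fun u hu ↦ mem_map.2 ?_
  exact ⟨⟨u, (mem_filter.1 hu).2⟩, mem_univ _, rfl⟩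

theorem sum_le_sum_of_forall_le_of_card_le {ι κ : Type*} {S : Finset ι} {T : Finset κ} {f : ι → ℕ}
    {g : κ → ℕ} (hfg : ∀ i ∈ S, ∀ j ∈ T, f i ≤ g j) (hcard : #S ≤ #T) :
    ∑ i ∈ S, f i ≤ ∑ j ∈ T, g j := by
  calc ∑ i ∈ S, f i ≤ #S * S.sup f := sum_le_card_nsmul _ _ _ fun i hi ↦ le_sup hi
    _ ≤ #T * S.sup f := by gcongr
    _ ≤ ∑ j ∈ T, g j :=
        card_nsmul_le_sum _ _ _ fun j hj ↦ Finset.sup_le fun i hi ↦ hfg i hi j hj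

section Greedy

open scoped Classical in
/-- The elements of `E` that belong to no block `Y j` with `j ∈ t`. -/
noncomputable def unassigned {ι α : Type*} (E : Finset α) (Y : ι → Finset α) (t : Set ι) :
    Finset α :=
  {x ∈ E | ∀ j ∈ t, x ∉ Y j}

theorem mem_unassigned {ι α : Type*} {E : Finset α} {Y : ι → Finset α} {t : Set ι} {x : α} :
    x ∈ unassigned E Y t ↔ x ∈ E ∧ ∀ j ∈ t, x ∉ Y j := by
  simp [unassigned]

theorem unassigned_subset {ι α : Type*} (E : Finset α) (Y : ι → Finset α) (t : Set ι) :
    unassigned E Y t ⊆ E := fun _ hx ↦ (mem_unassigned.1 hx).1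

theorem unassigned_anti {ι α : Type*} (E : Finset α) (Y : ι → Finset α) :
    Antitone (unassigned E Y) := fun _ _ h _ hx ↦
  mem_unassigned.2 ((mem_unassigned.1 hx).imp_right fun hx j hj ↦ hx j (h hj))

variable {ι α β : Type*} [LinearOrder ι] [DecidableEq β]

/-- `Y` assigns elements of `E` to the clusters in increasing order of their index: cluster `i`
receives as many elements as its size `s i` allows from a largest fibre of `p` among the elements
not yet assigned, and `u i` is the position of that fibre. -/
structure IsGreedy (p : α → β) (s : ι → ℕ) (E : Finset α) (Y : ι → Finset α) (u : ι → β) :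
    Prop where
  block_subset (i : ι) : Y i ⊆ {x ∈ unassigned E Y (Set.Iio i) | p x = u i}
  card_block (i : ι) : #(Y i) = min (s i) #{x ∈ unassigned E Y (Set.Iio i) | p x = u i}
  card_fiber_le (i : ι) (v : β) :
    #{x ∈ unassigned E Y (Set.Iio i) | p x = v} ≤ #{x ∈ unassigned E Y (Set.Iio i) | p x = u i}

theorem exists_largest_fiber [Nonempty β] (p : α → β) (Z : Finset α) :
    ∃ u, ∀ v, #{x ∈ Z | p x = v} ≤ #{x ∈ Z | p x = u} := by
  have hbdd : BddAbove (Set.range fun v ↦ #{x ∈ Z | p x = v}) :=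
    ⟨#Z, Set.forall_mem_range.2 fun _ ↦ card_filter_le _ _⟩
  obtain ⟨u, hu⟩ := Nat.sSup_mem (Set.range_nonempty _) hbdd
  exact ⟨u, fun v ↦ (le_csSup hbdd ⟨v, rfl⟩).trans hu.ge⟩

theorem exists_isGreedy [WellFoundedLT ι] [Nonempty β] (p : α → β) (s : ι → ℕ) (E : Finset α) :
    ∃ Y u, IsGreedy p s E Y u := by
  classical
  choose node hnode using exists_largest_fiber p
  have hpart (Z : Finset α) (c : ℕ) :
      ∃ B ⊆ {x ∈ Z | p x = node Z}, #B = min c #{x ∈ Z | p x = node Z} :=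
    exists_subset_card_eq (min_le_right _ _)
  choose block hblock hcard using hpart
  let Y : ι → Finset α := wellFounded_lt.fix fun i previous ↦
    block {x ∈ E | ∀ j (hj : j < i), x ∉ previous j hj} (s i)
  have hY (i : ι) : Y i = block (unassigned E Y (Set.Iio i)) (s i) := by
    refine (wellFounded_lt.fix_eq _ i).trans ?_
    congr 1
  exact ⟨Y, fun i ↦ node (unassigned E Y (Set.Iio i)), fun i ↦ by grind, fun i ↦ by grind,
    fun i ↦ hnode _⟩

namespace IsGreedy

variable {p : α → β} {s : ι → ℕ} {E : Finset α} {Y : ι → Finset α} {u : ι → β} {i : ι}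
  {t : Set ι}

theorem card_block_le (h : IsGreedy p s E Y u) (i : ι) : #(Y i) ≤ s i :=
  (h.card_block i).trans_le (min_le_left _ _)

theorem block_subset_unassigned (h : IsGreedy p s E Y u) (ht : t ⊆ Set.Iio i) :
    Y i ⊆ unassigned E Y t :=
  (h.block_subset i).trans ((filter_subset _ _).trans (unassigned_anti E Y ht))

theorem apply_eq_of_mem_block (h : IsGreedy p s E Y u) {x : α} (hx : x ∈ Y i) : p x = u i :=
  (mem_filter.1 (h.block_subset i hx)).2

theorem disjoint_block (h : IsGreedy p s E Y u) (i j : ι) (hij : i ≠ j) :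
    Disjoint (Y i) (Y j) := by
  wlog hlt : i < j generalizing i j
  · exact (this j i hij.symm (hij.lt_or_gt.resolve_left hlt)).symm
  exact disjoint_left.2 fun x hxi hxj ↦
    (mem_unassigned.1 (h.block_subset_unassigned subset_rfl hxj)).2 i hlt hxi

theorem sum_card_block_le (h : IsGreedy p s E Y u) {I : Finset ι}
    (hI : ∀ i ∈ I, t ⊆ Set.Iio i) : ∑ i ∈ I, #(Y i) ≤ #(unassigned E Y t) := by
  classical
  rw [← card_biUnion fun i _ j _ ↦ h.disjoint_block i j]
  exact card_le_card (biUnion_subset.2 fun i hi ↦ h.block_subset_unassigned (hI i hi))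

theorem card_fiber_unassigned_le (h : IsGreedy p s E Y u) (ht : Set.Iio i ⊆ t) (v : β) :
    #{x ∈ unassigned E Y t | p x = v} ≤ #{x ∈ E | p x = u i} :=
  calc #{x ∈ unassigned E Y t | p x = v}
      ≤ #{x ∈ unassigned E Y (Set.Iio i) | p x = v} := by gcongr; exact unassigned_anti E Y ht
    _ ≤ #{x ∈ unassigned E Y (Set.Iio i) | p x = u i} := h.card_fiber_le i v
    _ ≤ #{x ∈ E | p x = u i} := by gcongr; exact unassigned_subset E Y _

theorem apply_ne_of_card_block_lt (h : IsGreedy p s E Y u) (hi : #(Y i) < s i)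
    (ht : Set.Iic i ⊆ t) {x : α} (hx : x ∈ unassigned E Y t) : p x ≠ u i := by
  intro hxu
  have hexhaust : Y i = {x ∈ unassigned E Y (Set.Iio i) | p x = u i} :=
    eq_of_subset_of_card_le (h.block_subset i) (by have := h.card_block i; lia)
  have hmem : x ∈ Y i := by
    rw [hexhaust]
    exact mem_filter.2 ⟨unassigned_anti E Y (Set.Iio_subset_Iic_self.trans ht) hx, hxu⟩
  exact (mem_unassigned.1 hx).2 i (ht Set.self_mem_Iic) hmem

theorem exists_unassigned_apply_eq (h : IsGreedy p s E Y u)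
    (hne : (unassigned E Y Set.univ).Nonempty) (i : ι) :
    ∃ x ∈ unassigned E Y (Set.Iio i), p x = u i := by
  obtain ⟨x, hx⟩ := hne
  have hx' : x ∈ unassigned E Y (Set.Iio i) := unassigned_anti E Y (Set.subset_univ _) hx
  have hpos : 0 < #{y ∈ unassigned E Y (Set.Iio i) | p y = p x} :=
    card_pos.2 ⟨x, mem_filter.2 ⟨hx', rfl⟩⟩
  obtain ⟨y, hy⟩ := card_pos.1 (hpos.trans_le (h.card_fiber_le i (p x)))
  exact ⟨y, mem_filter.1 hy⟩

theorem injOn_node (h : IsGreedy p s E Y u) (hne : (unassigned E Y Set.univ).Nonempty) :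
    Set.InjOn u {i | #(Y i) < s i} := by
  intro i hi j hj hij
  by_contra hne_ij
  wlog hlt : i < j generalizing i j
  · exact this hj hi hij.symm (Ne.symm hne_ij) ((Ne.lt_or_gt hne_ij).resolve_left hlt)
  obtain ⟨x, hx, hxu⟩ := h.exists_unassigned_apply_eq hne j
  exact h.apply_ne_of_card_block_lt hi (Set.Iic_subset_Iio.2 hlt) hx (hxu.trans hij.symm)

end IsGreedy
end Greedy

section Depth

theorem card_le_card_filter_mem_of_subset_image {α β : Type*} [DecidableEq β] {p : α → β}
    {E : Finset α} {K : Finset β} (hK : K ⊆ E.image p) : #K ≤ #{x ∈ E | p x ∈ K} := by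
  refine (card_le_card fun u hu ↦ ?_).trans (card_image_le (f := p))
  obtain ⟨x, hx, rfl⟩ := mem_image.1 (hK hu)
  exact mem_image_of_mem p (mem_filter.2 ⟨hx, hu⟩)

theorem card_le_card_filter_mem_of_card_fiber_le {α β : Type*} [DecidableEq β] {p : α → β}
    {S E : Finset α} {K : Finset β} (hcard : #(S.image p) ≤ #K)
    (hfiber : ∀ u ∈ K, ∀ v, #{x ∈ S | p x = v} ≤ #{x ∈ E | p x = u}) :
    #S ≤ #{x ∈ E | p x ∈ K} :=
  calc #S = ∑ v ∈ S.image p, #{x ∈ S | p x = v} := card_eq_sum_card_image p S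
    _ ≤ ∑ u ∈ K, #{x ∈ E | p x = u} :=
        sum_le_sum_of_forall_le_of_card_le (fun v _ u hu ↦ hfiber u hu v) hcard
    _ = ∑ u ∈ K, #{x ∈ {x ∈ E | p x ∈ K} | p x = u} :=
        sum_congr rfl fun u hu ↦ congrArg card (by grind)
    _ = #{x ∈ E | p x ∈ K} := (card_eq_sum_card_fiberwise fun x hx ↦ (mem_filter.1 hx).2).symm

theorem card_lt_two_pow_of_length_lt {d : ℕ} {K : Finset (List Bool)}
    (hK : ∀ u ∈ K, u.length < d) : #K < 2 ^ d :=
  (card_le_sum_pow_of_length_lt hK).trans_lt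
    (by simpa using Nat.geomSum_lt le_rfl fun k hk ↦ mem_range.1 hk)

variable {α : Type*} {p : α → List Bool} {Z E : Finset α} {K : Finset (List Bool)}

/-- Fewer than `2 ^ d ≤ #K / 2` positions have depth below `d`. So at least half of `K` is deep, and
since the fibres over `K` are larger than those of `Z`, the elements over the deep part of `K`
outnumber the shallow elements of `Z`. -/
theorem mul_card_le_sum_length {d : ℕ} (hd : 2 * 2 ^ d ≤ #K) (hZE : Z ⊆ E)
    (hZK : ∀ x ∈ Z, p x ∉ K) (hKE : K ⊆ E.image p)
    (hfiber : ∀ u ∈ K, ∀ v, #{x ∈ Z | p x = v} ≤ #{x ∈ E | p x = u}) :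
    d * (2 * #Z + #K) ≤ 4 * ∑ x ∈ E, (p x).length := by
  classical
  set deepK := {u ∈ K | d ≤ u.length}
  set overK := {x ∈ E | p x ∈ deepK}
  set deepZ := {x ∈ Z | d ≤ (p x).length}
  set shallowZ := {x ∈ Z | ¬ d ≤ (p x).length}
  have hshallowK : #{u ∈ K | ¬ d ≤ u.length} < 2 ^ d :=
    card_lt_two_pow_of_length_lt fun u hu ↦ not_le.1 (mem_filter.1 hu).2
  have hK : #deepK + #{u ∈ K | ¬ d ≤ u.length} = #K := card_filter_add_card_filter_not _
  have hZ : #deepZ + #shallowZ = #Z := card_filter_add_card_filter_not _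
  have hdeepK : #deepK ≤ #overK :=
    card_le_card_filter_mem_of_subset_image ((filter_subset _ _).trans hKE)
  have hshallowZ : #shallowZ ≤ #overK := by
    have himage : #(shallowZ.image p) < 2 ^ d := card_lt_two_pow_of_length_lt <|
      forall_mem_image.2 fun x hx ↦ not_le.1 (mem_filter.1 hx).2
    refine card_le_card_filter_mem_of_card_fiber_le (by lia) fun u hu v ↦ ?_
    refine (card_le_card ?_).trans (hfiber u (mem_filter.1 hu).1 v)
    exact filter_subset_filter _ (filter_subset _ _)
  have hdisj : Disjoint overK deepZ := disjoint_left.2 fun x hx hxZ ↦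
    hZK x (mem_filter.1 hxZ).1 (mem_filter.1 (mem_filter.1 hx).2).1
  have hdeep : (#overK + #deepZ) * d ≤ ∑ x ∈ E, (p x).length := by
    rw [← card_union_of_disjoint hdisj, ← smul_eq_mul]
    refine (card_nsmul_le_sum _ (fun x ↦ (p x).length) d ?_).trans
      (sum_le_sum_of_subset (union_subset (filter_subset _ _) ((filter_subset _ _).trans hZE)))
    grind
  calc d * (2 * #Z + #K) ≤ d * (4 * (#overK + #deepZ)) := by gcongr; lia
    _ = 4 * ((#overK + #deepZ) * d) := by ring
    _ ≤ 4 * ∑ x ∈ E, (p x).length := by gcongr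

theorem card_le_sum_length (hroot : ∀ x ∈ E, p x ≠ []) : #E ≤ ∑ x ∈ E, (p x).length := by
  rw [card_eq_sum_ones]
  exact sum_le_sum fun x hx ↦ List.length_pos_iff.2 (hroot x hx)

theorem card_add_card_le_sum_length (hroot : ∀ x ∈ E, p x ≠ []) (hZE : Z ⊆ E)
    (hZK : ∀ x ∈ Z, p x ∉ K) (hKE : K ⊆ E.image p) :
    #Z + #K ≤ ∑ x ∈ E, (p x).length := by
  classical
  have hdisj : Disjoint Z {x ∈ E | p x ∈ K} :=
    disjoint_left.2 fun x hx hxK ↦ hZK x hx (mem_filter.1 hxK).2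
  calc #Z + #K ≤ #Z + #{x ∈ E | p x ∈ K} := by
        gcongr; exact card_le_card_filter_mem_of_subset_image hKE
    _ = #(Z ∪ {x ∈ E | p x ∈ K}) := (card_union_of_disjoint hdisj).symm
    _ ≤ #E := card_le_card (union_subset hZE (filter_subset _ _))
    _ ≤ ∑ x ∈ E, (p x).length := card_le_sum_length hroot

theorem card_mul_log_lt_sum_length (hroot : ∀ x ∈ E, p x ≠ []) (hK : K.Nonempty) (hZE : Z ⊆ E)
    (hZK : ∀ x ∈ Z, p x ∉ K) (hKE : K ⊆ E.image p)
    (hfiber : ∀ u ∈ K, ∀ v, #{x ∈ Z | p x = v} ≤ #{x ∈ E | p x = u}) :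
    (#Z + #K) * (Nat.log 2 #K + 2) < 8 * ∑ x ∈ E, (p x).length := by
  have hKpos : 0 < #K := hK.card_pos
  rcases le_or_gt (Nat.log 2 #K) 4 with hlog | hlog
  · have hcount := card_add_card_le_sum_length hroot hZE hZK hKE
    calc (#Z + #K) * (Nat.log 2 #K + 2) ≤ (#Z + #K) * 6 := by gcongr; lia
      _ < 8 * ∑ x ∈ E, (p x).length := by lia
  · obtain ⟨d, hd⟩ := Nat.exists_eq_add_of_lt hlog
    have hpow : 2 * 2 ^ (d + 4) ≤ #K := by
      rw [← pow_succ', show d + 4 + 1 = Nat.log 2 #K by lia]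
      exact Nat.pow_log_le_self 2 hKpos.ne'
    have hdepth := mul_card_le_sum_length hpow hZE hZK hKE hfiber
    rw [hd]
    nlinarith

end Depth

namespace IsGreedy
variable {ι α : Type*} [LinearOrder ι] {p : α → List Bool} {s : ι → ℕ} {E : Finset α}
  {Y : ι → Finset α} {u : ι → List Bool}

theorem card_mul_log_lt_sum_length (h : IsGreedy p s E Y u) (hroot : ∀ x ∈ E, p x ≠ [])
    (hne : (unassigned E Y Set.univ).Nonempty) {B : Finset ι} {t : Set ι} (hB : B.Nonempty)
    (hdeficient : ∀ i ∈ B, #(Y i) < s i) (ht : ∀ i ∈ B, Set.Iic i ⊆ t) :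
    (#(unassigned E Y t) + #B) * (Nat.log 2 #B + 2) < 8 * ∑ x ∈ E, (p x).length := by
  have hu : Set.InjOn u B := (h.injOn_node hne).mono hdeficient
  rw [← card_image_of_injOn hu]
  refine _root_.card_mul_log_lt_sum_length hroot (hB.image u) (unassigned_subset E Y t)
    (fun x hx hxu ↦ ?_) (image_subset_iff.2 fun i _ ↦ ?_) (forall_mem_image.2 fun i hi ↦ ?_)
  · obtain ⟨i, hi, hui⟩ := mem_image.1 hxu
    exact h.apply_ne_of_card_block_lt (hdeficient i hi) (ht i hi) hx hui.symm
  · obtain ⟨x, hx, hxu⟩ := h.exists_unassigned_apply_eq hne i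
    exact mem_image.2 ⟨x, unassigned_subset E Y _ hx, hxu⟩
  · exact h.card_fiber_unassigned_le (Set.Iio_subset_Iic_self.trans (ht i hi))

end IsGreedy

section DepthBound
variable {ι : Type*} {s : ι → ℕ} {J : Finset ι} {L : ℕ}

/-- The paper's `C'(L)`: the total size of the clusters in `J` of size less than `L`. -/
def smallMass (s : ι → ℕ) (J : Finset ι) (L : ℕ) : ℕ :=
  ∑ j ∈ J with s j < L, s j

/-- The paper's `D'(L)`: the number of clusters in `J` of size at least `L`. -/
def largeCount (s : ι → ℕ) (J : Finset ι) (L : ℕ) : ℕ :=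
  #{j ∈ J | L ≤ s j}

/-- The depth bound of the paper for the clusters in `J`. The minimum over `L` is an infimum of a
set of nonnegative reals; that set is nonempty unless `∑ j ∈ J, s j = 0`, where both terms of the
outer minimum are `0`. -/
noncomputable def depthBound (s : ι → ℕ) (J : Finset ι) : ℝ :=
  min (((∑ j ∈ J, s j : ℕ) : ℝ) / 8)
    ((1 / 32) * sInf {y : ℝ | ∃ L : ℕ, 1 ≤ L ∧ smallMass s J L < ∑ j ∈ J, s j ∧
      y = ((smallMass s J L : ℝ) + (largeCount s J L : ℝ)) *
        max 1 (Real.logb 2 (largeCount s J L : ℝ))})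

theorem smallMass_lt_sum {i : ι} (hi : i ∈ J) (hL : L ≤ s i) (hpos : 0 < s i) :
    smallMass s J L < ∑ j ∈ J, s j :=
  sum_lt_sum_of_subset (filter_subset _ _) hi (by simp [hL]) hpos fun _ _ _ ↦ Nat.zero_le _

theorem depthBound_le_sum (s : ι → ℕ) (J : Finset ι) :
    depthBound s J ≤ ((∑ j ∈ J, s j : ℕ) : ℝ) / 8 :=
  min_le_left _ _

theorem depthBound_le_level (hL : 1 ≤ L)
    (hsmall : smallMass s J L < ∑ j ∈ J, s j) :
    depthBound s J ≤ (1 / 32) * (((smallMass s J L : ℝ) + largeCount s J L) *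
      max 1 (Real.logb 2 (largeCount s J L))) := by
  refine (min_le_right _ _).trans ?_
  gcongr
  refine csInf_le ⟨0, ?_⟩ ⟨L, hL, hsmall, rfl⟩
  rintro y ⟨l, -, -, rfl⟩
  positivity

theorem max_one_logb_le {D b : ℕ} (hD : D ≤ 2 * b) :
    max 1 (Real.logb 2 D) ≤ (Nat.log 2 b + 2 : ℕ) := by
  refine max_le (by exact_mod_cast Nat.le_add_left 1 _) ?_
  rcases D.eq_zero_or_pos with rfl | hDpos
  · rw [Nat.cast_zero, Real.logb_zero]
    positivity
  rw [Real.logb_le_iff_le_rpow one_lt_two (by exact_mod_cast hDpos), Real.rpow_natCast]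
  have hb : b < 2 ^ (Nat.log 2 b + 1) := Nat.lt_pow_succ_log_self one_lt_two b
  exact_mod_cast (by rw [pow_succ]; lia : D ≤ 2 ^ (Nat.log 2 b + 2))

end DepthBound

namespace IsGreedy
variable {ι α β : Type*} [LinearOrder ι] [DecidableEq β] {p : α → β} {s : ι → ℕ} {E : Finset α}
  {Y : ι → Finset α} {u : ι → β}

theorem exists_deficient_level (h : IsGreedy p s E Y u) (hs : Antitone s) {J : Finset ι}
    (hJ : 2 * #E < ∑ j ∈ J, s j) :
    ∃ (N : ℕ) (B : Finset ι), B.Nonempty ∧ (∀ i ∈ B, i ∈ J ∧ #(Y i) < s i ∧ N < s i) ∧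
      smallMass s J (N + 1) ≤ 2 * #(unassigned E Y {j | N < s j}) ∧
      largeCount s J (N + 1) ≤ 2 * #B := by
  set A := {i ∈ J | #(Y i) < s i}
  set F := {i ∈ J | ¬ #(Y i) < s i}
  have hsplit : ∑ i ∈ A, s i + ∑ i ∈ F, s i = ∑ i ∈ J, s i := sum_filter_add_sum_filter_not _ _ _
  have hfull {I : Finset ι} (hI : I ⊆ F) : ∑ i ∈ I, s i = ∑ i ∈ I, #(Y i) :=
    sum_congr rfl fun i hi ↦
      le_antisymm (not_lt.1 (mem_filter.1 (hI hi)).2) (h.card_block_le i)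
  have hFA : ∑ i ∈ F, s i < ∑ i ∈ A, s i := by
    have hF : ∑ i ∈ F, s i ≤ #E := by
      rw [hfull subset_rfl]
      exact (h.sum_card_block_le fun i _ ↦ Set.empty_subset _).trans
        (card_le_card (unassigned_subset E Y ∅))
    lia
  obtain ⟨N, hne, hcard, hsum⟩ := exists_balanced_level s hFA
  refine ⟨N, {i ∈ A | N < s i}, hne, by grind, ?_, ?_⟩
  · have hFN : ∑ i ∈ F with s i ≤ N, s i ≤ #(unassigned E Y {j | N < s j}) := by
      rw [hfull (filter_subset _ _)]
      refine h.sum_card_block_le fun i hi j hj ↦ hs.reflect_lt ?_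
      exact (mem_filter.1 hi).2.trans_lt hj
    calc smallMass s J (N + 1) = ∑ i ∈ A with s i ≤ N, s i + ∑ i ∈ F with s i ≤ N, s i := by
          simp only [smallMass, Order.lt_add_one_iff, A, F]
          rw [filter_comm, filter_comm (fun i ↦ ¬ #(Y i) < s i), sum_filter_add_sum_filter_not]
      _ ≤ 2 * #(unassigned E Y {j | N < s j}) := by lia
  · calc largeCount s J (N + 1) = #{i ∈ A | N < s i} + #{i ∈ F | N < s i} := by
          simp only [largeCount, Order.add_one_le_iff, A, F]
          rw [filter_comm, filter_comm (fun i ↦ ¬ #(Y i) < s i), card_filter_add_card_filter_not]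
      _ ≤ 2 * #{i ∈ A | N < s i} := by lia

end IsGreedy

theorem IsGreedy.depthBound_lt_sum_length {ι α : Type*} [LinearOrder ι] {p : α → List Bool}
    {s : ι → ℕ} {E : Finset α} {Y : ι → Finset α} {u : ι → List Bool} (h : IsGreedy p s E Y u)
    (hs : Antitone s) (hroot : ∀ x ∈ E, p x ≠ []) (hne : (unassigned E Y Set.univ).Nonempty)
    (J : Finset ι) : 2 * depthBound s J < ∑ x ∈ E, ((p x).length : ℝ) := by
  by_contra! hle
  rw [← Nat.cast_sum] at hle
  set T := ∑ x ∈ E, (p x).length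
  have hTJ : 4 * T ≤ ∑ j ∈ J, s j := by
    have hle' : (4 * T : ℝ) ≤ (∑ j ∈ J, s j : ℕ) := by linarith [depthBound_le_sum s J]
    exact_mod_cast hle'
  have hET : #E ≤ T := card_le_sum_length hroot
  have hE : 0 < #E := (hne.mono (unassigned_subset E Y _)).card_pos
  obtain ⟨N, B, hB, hBspec, hsmall, hlarge⟩ := h.exists_deficient_level hs (J := J) (by lia)
  obtain ⟨i, hi⟩ := hB
  have hlevel := hle.trans (mul_le_mul_of_nonneg_left (depthBound_le_level (Nat.le_add_left 1 N)
    (smallMass_lt_sum (hBspec i hi).1 (hBspec i hi).2.2 (by grind))) zero_le_two)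
  set R := unassigned E Y {j | N < s j}
  have hdepth : (#R + #B) * (Nat.log 2 #B + 2) < 8 * T :=
    h.card_mul_log_lt_sum_length hroot hne ⟨i, hi⟩ (fun i hi ↦ (hBspec i hi).2.1)
      fun i hi j hj ↦ (hBspec i hi).2.2.trans_le (hs hj)
  have hbound : ((smallMass s J (N + 1) : ℝ) + largeCount s J (N + 1)) *
      max 1 (Real.logb 2 (largeCount s J (N + 1))) ≤
        (2 * (#R + #B) : ℕ) * (Nat.log 2 #B + 2 : ℕ) := by
    gcongr
    · exact_mod_cast (by lia : smallMass s J (N + 1) + largeCount s J (N + 1) ≤ 2 * (#R + #B))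
    · exact max_one_logb_le hlarge
  have hT : (8 * T : ℝ) ≤ ((#R + #B) * (Nat.log 2 #B + 2) : ℕ) := by
    push_cast at hbound ⊢
    linarith
  exact hdepth.not_ge (by exact_mod_cast hT)

theorem stmt_6_general {ι α : Type*} [Fintype ι] [Fintype α] (s : ι → ℕ)
    (hsum : ∑ j, s j = Fintype.card α) (J : Finset ι) (p : α → List Bool)
    (hp : ∑ x, ((p x).length : ℝ) ≤ 2 * depthBound s J) :
    ∃ X : ι → Finset α,
      (∀ j, #(X j) = s j) ∧
      (∀ j j', j ≠ j' → Disjoint (X j) (X j')) ∧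
      (∀ x, ∃ j, x ∈ X j) ∧
      (∀ j, ∀ x ∈ X j, ∀ y ∈ X j, p x <+: p y ∨ p y <+: p x) := by
  obtain ⟨_, hs⟩ := exists_linearOrder_antitone s
  obtain ⟨Y, u, hY⟩ := exists_isGreedy p s {x | p x ≠ []}
  have hassigned (x : α) (hx : p x ≠ []) : ∃ j, x ∈ Y j := by
    by_contra! hxY
    refine (hY.depthBound_lt_sum_length hs (by simp) ⟨x, ?_⟩ J).not_ge (le_trans ?_ hp)
    · exact mem_unassigned.2 ⟨by simpa using hx, fun j _ ↦ hxY j⟩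
    · exact sum_le_sum_of_subset_of_nonneg (subset_univ _) fun _ _ _ ↦ Nat.cast_nonneg _
  obtain ⟨X, hYX, hcard, hdisj, hcover⟩ :=
    exists_partition_extending hsum hY.disjoint_block hY.card_block_le
  refine ⟨X, hcard, hdisj, hcover, fun j ↦ ?_⟩
  have hnode (x : α) (hx : x ∈ X j) : p x = [] ∨ p x = u j := by
    refine or_iff_not_imp_left.2 fun hroot ↦ ?_
    obtain ⟨i, hi⟩ := hassigned x hroot
    obtain rfl : i = j := by_contra fun hij ↦ disjoint_left.1 (hdisj i j hij) (hYX i hi) hx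
    exact hY.apply_eq_of_mem_block hi
  grind

/-- Combinatorial core of Proposition 13 ('lower_block_sorting'): if the total depth of
all elements is at most twice `min(n'/8, (1/32)·min_L (C'(L)+D'(L))·max{1, log₂ D'(L)})`,
then the cluster structure with sizes `s₁ ≥ … ≥ s_m` can be realized so that every
cluster lies on a single root-to-leaf path. Here `k` is the least index such that the
tail `s' = (s_{k+1}, …, s_m)` (0-indexed: indices `≥ k`) has sum `n' ≤ (3/4)·n`. -/
theorem stmt_6 (m n n' k : ℕ) (hm : 2 ≤ m) (s : Fin m → ℕ)
    (hdec : ∀ i j : Fin m, i ≤ j → s j ≤ s i)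
    (hpos : ∀ j, 1 ≤ s j)
    (hsum : ∑ j, s j = n)
    (hk : k < m)
    (hn' : ∑ j ∈ Finset.univ.filter (fun j : Fin m => k ≤ (j : ℕ)), s j = n')
    (htail : (n' : ℝ) ≤ (3 / 4) * n)
    (hleast : ∀ k' < k, (3 / 4 : ℝ) * n <
      ((∑ j ∈ Finset.univ.filter (fun j : Fin m => k' ≤ (j : ℕ)), s j : ℕ) : ℝ))
    (C' D' : ℕ → ℕ)
    (hC' : ∀ L, C' L = ∑ j ∈ Finset.univ.filter
      (fun j : Fin m => k ≤ (j : ℕ) ∧ s j < L), s j)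
    (hD' : ∀ L, D' L = (Finset.univ.filter
      (fun j : Fin m => k ≤ (j : ℕ) ∧ L ≤ s j)).card)
    (p : Fin n → List Bool)
    (hp : (∑ x, ((p x).length : ℝ)) ≤
      2 * min ((n' : ℝ) / 8)
        ((1 / 32) * sInf {y : ℝ | ∃ L : ℕ, 1 ≤ L ∧ C' L < n' ∧
          y = ((C' L : ℝ) + (D' L : ℝ)) * max 1 (Real.logb 2 ((D' L : ℝ)))})) :
    ∃ X : Fin m → Finset (Fin n),
      (∀ j, (X j).card = s j) ∧
      (∀ j j', j ≠ j' → Disjoint (X j) (X j')) ∧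
      (∀ x, ∃ j, x ∈ X j) ∧
      (∀ j, ∀ x ∈ X j, ∀ y ∈ X j, p x <+: p y ∨ p y <+: p x) := by
  obtain rfl : C' = smallMass s {j | k ≤ (j : ℕ)} :=
    funext fun L ↦ by rw [hC', smallMass, Finset.filter_filter]
  obtain rfl : D' = largeCount s {j | k ≤ (j : ℕ)} :=
    funext fun L ↦ by rw [hD', largeCount, Finset.filter_filter]
  subst hn'
  exact stmt_6_general s (by simpa using hsum) _ p hp
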